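/- arXiv:2111.01847 — 7 statements merged into one kernel-verified Lean document; each statement's English description precedes it below -/
import Mathlib

section
/- Let A be a real d×d matrix with singular value decomposition A = Σ_{i=1}^d σ_i u_i v_iᵀ, where (u_i)_{i=1}^d and (v_i)_{i=1}^d are orthonormal families in ℝ^d and the singular values satisfy σ_1 ≥ σ_2 ≥ … ≥ σ_d ≥ 0. Then for every 1 ≤ R ≤ d, the rank-R truncation satisfies ‖A − Σ_{i=1}^R σ_i u_i v_iᵀ‖_F² ≤ (1 − R/d)‖A‖_F²; that is, the Rank-R compressor is a contraction compressor with parameter δ = R/d. -/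
open Matrix Finset

/-- Frobenius norm squared: sum of squares of all entries. -/
noncomputable def frobSq {d : ℕ} (M : Matrix (Fin d) (Fin d) ℝ) : ℝ :=
  ∑ i, ∑ j, (M i j) ^ 2

/-!
The matrices `u i (v i)ᵀ` are orthonormal for the Frobenius inner product, so by Pythagoras `‖A‖_F²`
is `∑ i, σ i ^ 2` and the squared truncation error is the part of this sum over the discarded
indices. The `R` kept weights are the largest of the `d`, so Chebyshev's sum inequality, applied to
the weights and the indicator of the kept indices, gives them at least the fraction `R / d` of the
total.
-/

section Dominant

variable {ι : Type*} {s t : Finset ι}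

theorem card_mul_sum_le_card_mul_sum_of_dominant {α : Type*} [Semiring α] [LinearOrder α]
    [IsStrictOrderedRing α] [ExistsAddOfLE α] {f : ι → α} (hst : s ⊆ t)
    (hf : ∀ i ∈ s, ∀ j ∈ t, j ∉ s → f j ≤ f i) :
    #s * ∑ i ∈ t, f i ≤ #t * ∑ i ∈ s, f i := by
  classical
  have hmono : MonovaryOn (fun i ↦ if i ∈ s then (1 : α) else 0) f t := by
    intro i _ j hj hij
    by_cases hi : i ∈ s
    · have hjs : j ∈ s := by_contra fun hjs ↦ (hf i hi j hj hjs).not_gt hij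
      simp [hi, hjs]
    · simp only [hi, if_false]
      positivity
  simpa [inter_eq_right.2 hst] using hmono.sum_mul_sum_le_card_mul_sum

variable {𝕜 E : Type*} [RCLike 𝕜] [SeminormedAddCommGroup E] [InnerProductSpace 𝕜 E] {x : ι → E}

theorem norm_sum_sq_of_pairwise_inner_eq_zero
    (hx : (s : Set ι).Pairwise fun i j ↦ inner 𝕜 (x i) (x j) = 0) :
    ‖∑ i ∈ s, x i‖ ^ 2 = ∑ i ∈ s, ‖x i‖ ^ 2 := by
  classical
  induction s using Finset.induction_on with
  | empty => simp
  | insert a s ha ih =>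
    have hxs : (s : Set ι).Pairwise fun i j ↦ inner 𝕜 (x i) (x j) = 0 :=
      hx.mono (by simp)
    have horth : inner 𝕜 (x a) (∑ i ∈ s, x i) = 0 := by
      rw [inner_sum]
      exact sum_eq_zero fun i hi ↦ hx (by simp) (by simp [hi]) (ne_of_mem_of_not_mem hi ha).symm
    rw [sum_insert ha, sum_insert ha, norm_add_sq (𝕜 := 𝕜), horth, ih hxs, map_zero, mul_zero,
      add_zero]

theorem norm_sum_sub_sum_sq_le_of_dominant (hst : s ⊆ t)
    (hx : (t : Set ι).Pairwise fun i j ↦ inner 𝕜 (x i) (x j) = 0)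
    (hdom : ∀ i ∈ s, ∀ j ∈ t, j ∉ s → ‖x j‖ ≤ ‖x i‖) :
    ‖∑ i ∈ t, x i - ∑ i ∈ s, x i‖ ^ 2 ≤ (1 - (#s : ℝ) / #t) * ‖∑ i ∈ t, x i‖ ^ 2 := by
  classical
  have herror : ‖∑ i ∈ t, x i - ∑ i ∈ s, x i‖ ^ 2 = ∑ i ∈ t, ‖x i‖ ^ 2 - ∑ i ∈ s, ‖x i‖ ^ 2 := by
    rw [← sum_sdiff_eq_sub hst, ← sum_sdiff_eq_sub hst]
    exact norm_sum_sq_of_pairwise_inner_eq_zero (hx.mono (by simp))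
  have hkept : (#s : ℝ) / #t * ∑ i ∈ t, ‖x i‖ ^ 2 ≤ ∑ i ∈ s, ‖x i‖ ^ 2 := by
    rw [div_mul_eq_mul_div]
    refine div_le_of_le_mul₀ (by positivity) (by positivity) ?_
    rw [mul_comm (∑ i ∈ s, _)]
    refine card_mul_sum_le_card_mul_sum_of_dominant hst fun i hi j hj hjs ↦ ?_
    gcongr
    exact hdom i hi j hj hjs
  rw [herror, norm_sum_sq_of_pairwise_inner_eq_zero hx]
  linarith

end Dominant

section Frobenius

open scoped Matrix.Norms.Frobenius InnerProductSpace

variable {m n : Type*} [Fintype m] [Fintype n]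

theorem frobenius_norm_sq {α : Type*} [SeminormedAddCommGroup α] (A : Matrix m n α) :
    ‖A‖ ^ 2 = ∑ i, ∑ j, ‖A i j‖ ^ 2 := by
  rw [frobenius_norm_def, ← Real.sqrt_eq_rpow, Real.sq_sqrt (by positivity)]
  simp only [Real.rpow_two]

theorem frobSq_eq_norm_sq {d : ℕ} (M : Matrix (Fin d) (Fin d) ℝ) : frobSq M = ‖M‖ ^ 2 := by
  simp only [frobSq, frobenius_norm_sq, Real.norm_eq_abs, sq_abs]

variable {𝕜 : Type*} [RCLike 𝕜]

/-- The Frobenius inner product `tr (Aᴴ * B)` on matrices, inducing the Frobenius norm. Like that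
norm in Mathlib, it is only made an instance locally. -/
noncomputable abbrev frobeniusInnerProductSpace : InnerProductSpace 𝕜 (Matrix m n 𝕜) where
  inner A B := trace (Aᴴ * B)
  norm_sq_eq_re_inner A := by
    rw [frobenius_norm_sq, sum_comm]
    simp only [trace, diag_apply, mul_apply, conjTranspose_apply, RCLike.star_def, RCLike.conj_mul,
      map_sum, ← RCLike.ofReal_pow, RCLike.ofReal_re]
  conj_inner_symm A B := by
    rw [starRingEnd_apply, ← trace_conjTranspose, conjTranspose_mul, conjTranspose_conjTranspose]
  add_left A B C := by rw [conjTranspose_add, Matrix.add_mul, trace_add]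
  smul_left A B c := by simp

attribute [local instance] frobeniusInnerProductSpace

theorem inner_vecMulVec_vecMulVec (u u' : m → 𝕜) (v v' : n → 𝕜) :
    ⟪vecMulVec u v, vecMulVec u' v'⟫_𝕜 =
      ⟪WithLp.toLp 2 u, WithLp.toLp 2 u'⟫_𝕜 * ⟪WithLp.toLp 2 v, WithLp.toLp 2 v'⟫_𝕜 := by
  change trace ((vecMulVec u v)ᴴ * vecMulVec u' v') = _
  rw [conjTranspose_vecMulVec, vecMulVec_mul_vecMulVec, trace_vecMulVec, dotProduct_smul,
    smul_eq_mul, EuclideanSpace.inner_toLp_toLp, EuclideanSpace.inner_toLp_toLp,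
    dotProduct_comm u', dotProduct_comm v']

variable {ι : Type*} {u : ι → m → 𝕜} {v : ι → n → 𝕜}

theorem orthonormal_vecMulVec (hu : ∀ i, ‖WithLp.toLp 2 (u i)‖ = 1)
    (hv : Orthonormal 𝕜 fun i ↦ WithLp.toLp 2 (v i)) :
    Orthonormal 𝕜 fun i ↦ vecMulVec (u i) (v i) := by
  classical
  rw [orthonormal_iff_ite] at hv ⊢
  intro i j
  rw [inner_vecMulVec_vecMulVec, hv]
  split_ifs with hij
  · rw [← hij, inner_self_eq_norm_sq_to_K, hu, RCLike.ofReal_one, one_pow, one_mul]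
  · rw [mul_zero]

theorem rankR_contraction_general [Fintype ι] {A : Matrix m n 𝕜} {σ : ι → 𝕜}
    (hu : ∀ i, ‖WithLp.toLp 2 (u i)‖ = 1) (hv : Orthonormal 𝕜 fun i ↦ WithLp.toLp 2 (v i))
    (hA : A = ∑ i, σ i • vecMulVec (u i) (v i)) {s : Finset ι}
    (hσ : ∀ i ∈ s, ∀ j ∉ s, ‖σ j‖ ≤ ‖σ i‖) :
    ‖A - ∑ i ∈ s, σ i • vecMulVec (u i) (v i)‖ ^ 2 ≤
      (1 - (#s : ℝ) / Fintype.card ι) * ‖A‖ ^ 2 := by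
  have hortho := orthonormal_vecMulVec hu hv
  rw [hA, ← card_univ]
  refine norm_sum_sub_sum_sq_le_of_dominant (𝕜 := 𝕜) (subset_univ s) ?_ ?_
  · intro i _ j _ hij
    rw [inner_smul_left, inner_smul_right, hortho.2 hij, mul_zero, mul_zero]
  · intro i hi j _ hj
    simpa only [norm_smul, hortho.1, mul_one] using hσ i hi j hj

end Frobenius

theorem orthonormal_toLp_real_iff {ι n : Type*} [DecidableEq ι] [Fintype n] {v : ι → n → ℝ} :
    Orthonormal ℝ (fun i ↦ WithLp.toLp 2 (v i)) ↔
      ∀ i j, ∑ k, v i k * v j k = if i = j then 1 else 0 := by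
  simp [orthonormal_iff_ite, PiLp.inner_apply, mul_comm]

/-- The Rank-`R` truncation of an SVD is a contraction compressor with parameter `R/d`. -/
theorem rankR_contraction (d : ℕ) (A : Matrix (Fin d) (Fin d) ℝ)
    (σ : Fin d → ℝ) (u v : Fin d → Fin d → ℝ)
    (hu : ∀ i j, (∑ s, u i s * u j s) = if i = j then (1 : ℝ) else 0)
    (hv : ∀ i j, (∑ s, v i s * v j s) = if i = j then (1 : ℝ) else 0)
    (hσnonneg : ∀ i, 0 ≤ σ i)
    (hσmono : ∀ i j : Fin d, i ≤ j → σ j ≤ σ i)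
    (hA : A = ∑ i, σ i • Matrix.vecMulVec (u i) (v i))
    (R : ℕ) (hR1 : 1 ≤ R) (hRd : R ≤ d) :
    frobSq (A - ∑ i ∈ Finset.univ.filter (fun i : Fin d => (i : ℕ) < R),
        σ i • Matrix.vecMulVec (u i) (v i))
      ≤ (1 - (R : ℝ) / d) * frobSq A := by
  simpa [frobSq_eq_norm_sq, Fin.card_filter_val_lt, hRd] using
    rankR_contraction_general (s := {i : Fin d | (i : ℕ) < R}) (orthonormal_toLp_real_iff.2 hu).1
      (orthonormal_toLp_real_iff.2 hv) hA fun i hi j hj ↦ by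
        simpa [abs_of_nonneg, hσnonneg] using hσmono i j (by grind)
end

section
/- Let A be a real d×d matrix with singular value decomposition A = Σ_{i=1}^d σ_i u_i v_iᵀ, where (u_i) and (v_i) are orthonormal families in ℝ^d and σ_1 ≥ … ≥ σ_d ≥ 0. Fix 1 ≤ R ≤ d, constants a_i, b_i > 0 for i ∈ [R], and parameters ω₁, ω₂ ≥ 0. Let p_1, …, p_R, q_1, …, q_R : Ω → ℝ^d be mutually independent square-integrable random vectors on a probability space (Ω, 𝓕, ℙ) satisfying E[p_i] = a_i u_i, E‖p_i‖² ≤ (ω₁ + 1)a_i², E[q_i] = b_i v_i, and E‖q_i‖² ≤ (ω₂ + 1)b_i² for every i ∈ [R]. Define the random matrix 𝒞₁(A) := Σ_{i=1}^R σ_i p_i q_iᵀ / (a_i b_i (ω₁+1)(ω₂+1)). Then E‖𝒞₁(A) − A‖_F² ≤ (1 − R/(d(ω₁+1)(ω₂+1)))‖A‖_F²; that is, 𝒞₁ is a contraction compressor with parameter R/(d(ω₁+1)(ω₂+1)). -/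
open Matrix Finset MeasureTheory ProbabilityTheory

/-!
Expand `E‖Z - A‖² = E‖Z‖² - 2 E⟪Z, A⟫ + ‖A‖²`, where `Z` is the compressed matrix. By independence,
distinct rank-one summands of `Z` are orthogonal in expectation, because the `u i` are; hence
`E‖Z‖²` is a sum of `R` second moments, each at most the corresponding summand of `E⟪Z, A⟫`, namely
`σ i ^ 2 / ((ω₁ + 1) (ω₂ + 1))`. The error is therefore at most `‖A‖²` minus the sum of these
quantities, and the `R` largest of the `d` numbers `σ i ^ 2` carry at least the fraction `R / d` of
their total `‖A‖²`. Only the Hilbert space structure matters: matrices with the Frobenius norm are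
the Hilbert tensor product `ℝᵈ ⊗ ℝᵈ`, with `x yᵀ` corresponding to `x ⊗ₜ y`.
-/

lemma card_div_card_univ_mul_sum_le_sum {ι : Type*} [Fintype ι] {S : Finset ι} {f : ι → ℝ}
    (hf : ∀ i ∈ S, ∀ j ∉ S, f j ≤ f i) : #S / Fintype.card ι * ∑ i, f i ≤ ∑ i ∈ S, f i := by
  classical
  have hmono : Monovary (fun i ↦ if i ∈ S then (1 : ℝ) else 0) f := by
    intro i j hij
    by_cases hi : i ∈ S
    · have hj : j ∈ S := by_contra fun hj ↦ (hf i hi j hj).not_gt hij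
      simp [hi, hj]
    · simp only [hi, if_false]
      positivity
  have hchebyshev : #S * ∑ i, f i ≤ Fintype.card ι * ∑ i ∈ S, f i := by
    simpa using hmono.sum_mul_sum_le_card_mul_sum
  cases isEmpty_or_nonempty ι
  · simp [Finset.eq_empty_of_isEmpty]
  · rwa [div_mul_eq_mul_div, div_le_iff₀' (by exact_mod_cast Fintype.card_pos)]

section SecondMoment

open scoped RealInnerProductSpace

variable {Ω H : Type*} [MeasurableSpace Ω] {μ : Measure Ω}
  [NormedAddCommGroup H] [InnerProductSpace ℝ H]

lemma integrable_inner_of_memLp_two {X Y : Ω → H} (hX : MemLp X 2 μ) (hY : MemLp Y 2 μ) :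
    Integrable (fun ω ↦ ⟪X ω, Y ω⟫) μ :=
  memLp_one_iff_integrable.1 ((innerSL ℝ).memLp_of_bilin 1 hX hY)

lemma integral_norm_sum_sq_of_pairwise_orthogonal {ι : Type*} {S : Finset ι} {X : ι → Ω → H}
    (hX : ∀ i ∈ S, MemLp (X i) 2 μ)
    (horth : (S : Set ι).Pairwise fun i j ↦ ∫ ω, ⟪X i ω, X j ω⟫ ∂μ = 0) :
    ∫ ω, ‖∑ i ∈ S, X i ω‖ ^ 2 ∂μ = ∑ i ∈ S, ∫ ω, ‖X i ω‖ ^ 2 ∂μ := by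
  have hint : ∀ i ∈ S, ∀ j ∈ S, Integrable (fun ω ↦ ⟪X i ω, X j ω⟫) μ := fun i hi j hj ↦
    integrable_inner_of_memLp_two (hX i hi) (hX j hj)
  simp_rw [← real_inner_self_eq_norm_sq, sum_inner, inner_sum]
  rw [integral_finsetSum _ fun i hi ↦ integrable_finsetSum _ (hint i hi)]
  refine sum_congr rfl fun i hi ↦ ?_
  rw [integral_finsetSum _ (hint i hi)]
  exact sum_eq_single_of_mem i hi fun j hj hji ↦ horth hi hj hji.symm

variable [IsProbabilityMeasure μ]

lemma integral_norm_sub_const_sq {X : Ω → H} (hX : MemLp X 2 μ) (A : H) :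
    ∫ ω, ‖X ω - A‖ ^ 2 ∂μ = ∫ ω, ‖X ω‖ ^ 2 ∂μ - 2 * ∫ ω, ⟪X ω, A⟫ ∂μ + ‖A‖ ^ 2 := by
  have hsq : Integrable (fun ω ↦ ‖X ω‖ ^ 2) μ := hX.integrable_norm_pow two_ne_zero
  have hinner : Integrable (fun ω ↦ 2 * ⟪X ω, A⟫) μ :=
    ((hX.integrable one_le_two).inner_const A).const_mul 2
  simp_rw [norm_sub_sq_real]
  have hsub : Integrable (fun ω ↦ ‖X ω‖ ^ 2 - 2 * ⟪X ω, A⟫) μ := hsq.sub hinner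
  rw [integral_add hsub (integrable_const _), integral_sub hsq hinner, integral_const_mul,
    integral_const, probReal_univ, one_smul]

lemma integral_norm_sum_smul_sub_sq_le {ι : Type*} {S : Finset ι} {X : ι → Ω → H} {A : H}
    {σ c : ι → ℝ} {K : ℝ} (hK : 0 < K) (hc : ∀ i ∈ S, c i ≠ 0)
    (hX : ∀ i ∈ S, MemLp (X i) 2 μ)
    (horth : (S : Set ι).Pairwise fun i j ↦ ∫ ω, ⟪X i ω, X j ω⟫ ∂μ = 0)
    (hinner : ∀ i ∈ S, ∫ ω, ⟪X i ω, A⟫ ∂μ = c i * σ i)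
    (hsq : ∀ i ∈ S, ∫ ω, ‖X i ω‖ ^ 2 ∂μ ≤ K * c i ^ 2) :
    ∫ ω, ‖∑ i ∈ S, (σ i / (c i * K)) • X i ω - A‖ ^ 2 ∂μ ≤ ‖A‖ ^ 2 - (∑ i ∈ S, σ i ^ 2) / K := by
  have hY : ∀ i ∈ S, MemLp (fun ω ↦ (σ i / (c i * K)) • X i ω) 2 μ := fun i hi ↦
    (hX i hi).const_smul _
  have second_moment :
      ∫ ω, ‖∑ i ∈ S, (σ i / (c i * K)) • X i ω‖ ^ 2 ∂μ ≤ (∑ i ∈ S, σ i ^ 2) / K := by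
    rw [integral_norm_sum_sq_of_pairwise_orthogonal hY fun i hi j hj hij ↦ by
      simp_rw [real_inner_smul_left, real_inner_smul_right, integral_const_mul,
        horth hi hj hij, mul_zero], sum_div]
    refine sum_le_sum fun i hi ↦ ?_
    simp_rw [norm_smul, mul_pow, integral_const_mul, Real.norm_eq_abs, sq_abs]
    calc (σ i / (c i * K)) ^ 2 * ∫ ω, ‖X i ω‖ ^ 2 ∂μ
        ≤ (σ i / (c i * K)) ^ 2 * (K * c i ^ 2) := by gcongr; exact hsq i hi
      _ = σ i ^ 2 / K := by have := hc i hi; field_simp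
  have cross_term :
      ∫ ω, ⟪∑ i ∈ S, (σ i / (c i * K)) • X i ω, A⟫ ∂μ = (∑ i ∈ S, σ i ^ 2) / K := by
    simp_rw [sum_inner]
    rw [integral_finsetSum _ fun i hi ↦ ((hY i hi).integrable one_le_two).inner_const A, sum_div]
    refine sum_congr rfl fun i hi ↦ ?_
    simp_rw [real_inner_smul_left, integral_const_mul, hinner i hi]
    have := hc i hi
    field_simp
  have hsum : MemLp (fun ω ↦ ∑ i ∈ S, (σ i / (c i * K)) • X i ω) 2 μ := memLp_finsetSum S hY
  rw [integral_norm_sub_const_sq hsum A, cross_term]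
  linarith

end SecondMoment

section TensorProduct

open scoped TensorProduct RealInnerProductSpace

variable {Ω E F : Type*} [MeasurableSpace Ω] {μ : Measure Ω}
  [NormedAddCommGroup E] [InnerProductSpace ℝ E] [NormedAddCommGroup F] [InnerProductSpace ℝ F]

lemma inner_smul_tmul_smul_left (r s : ℝ) (x : E) (y : F) (z : E ⊗[ℝ] F) :
    ⟪(r • x) ⊗ₜ[ℝ] (s • y), z⟫ = r * s * ⟪x ⊗ₜ[ℝ] y, z⟫ := by
  rw [TensorProduct.smul_tmul_smul]
  exact real_inner_smul_left (F := E ⊗[ℝ] F) ..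

lemma orthonormal_tmul_diag {ι : Type*} {u : ι → E} {v : ι → F} (hu : Orthonormal ℝ u)
    (hv : Orthonormal ℝ v) : Orthonormal ℝ fun i ↦ u i ⊗ₜ[ℝ] v i :=
  (hu.tmul hv).comp (fun i ↦ (i, i)) fun _ _ h ↦ congrArg Prod.fst h

variable [MeasurableSpace E] [BorelSpace E] [MeasurableSpace F] [BorelSpace F]

lemma integral_norm_tmul_sq_of_indepFun {p : Ω → E} {q : Ω → F} (hpq : p ⟂ᵢ[μ] q)
    (hp : AEStronglyMeasurable p μ) (hq : AEStronglyMeasurable q μ) :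
    ∫ ω, ‖p ω ⊗ₜ[ℝ] q ω‖ ^ 2 ∂μ = (∫ ω, ‖p ω‖ ^ 2 ∂μ) * ∫ ω, ‖q ω‖ ^ 2 ∂μ := by
  have hsq : (fun ω ↦ ‖p ω‖ ^ 2) ⟂ᵢ[μ] fun ω ↦ ‖q ω‖ ^ 2 :=
    hpq.comp (measurable_norm.pow_const 2) (measurable_norm.pow_const 2)
  simp_rw [TensorProduct.norm_tmul, mul_pow]
  exact hsq.integral_fun_mul_eq_mul_integral (hp.norm.pow 2) (hq.norm.pow 2)

lemma memLp_two_tmul_of_indepFun {p : Ω → E} {q : Ω → F} (hpq : p ⟂ᵢ[μ] q)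
    (hp : MemLp p 2 μ) (hq : MemLp q 2 μ) : MemLp (fun ω ↦ p ω ⊗ₜ[ℝ] q ω) 2 μ := by
  have hsq : (fun ω ↦ ‖p ω‖ ^ 2) ⟂ᵢ[μ] fun ω ↦ ‖q ω‖ ^ 2 :=
    hpq.comp (measurable_norm.pow_const 2) (measurable_norm.pow_const 2)
  rw [memLp_two_iff_integrable_sq_norm
    (TensorProduct.continuous_tmul.comp_aestronglyMeasurable (hp.1.prodMk hq.1))]
  simp_rw [TensorProduct.norm_tmul, mul_pow]
  exact hsq.integrable_mul (hp.integrable_norm_pow two_ne_zero)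
    (hq.integrable_norm_pow two_ne_zero)

lemma integral_inner_tmul_tmul_of_indepFun [SecondCountableTopology E] [SecondCountableTopology F]
    {p p' : Ω → E} {q q' : Ω → F}
    (hpq : (fun ω ↦ (p ω, p' ω)) ⟂ᵢ[μ] fun ω ↦ (q ω, q' ω))
    (hp : AEStronglyMeasurable p μ) (hp' : AEStronglyMeasurable p' μ)
    (hq : AEStronglyMeasurable q μ) (hq' : AEStronglyMeasurable q' μ) :
    ∫ ω, ⟪p ω ⊗ₜ[ℝ] q ω, p' ω ⊗ₜ[ℝ] q' ω⟫ ∂μ =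
      (∫ ω, ⟪p ω, p' ω⟫ ∂μ) * ∫ ω, ⟪q ω, q' ω⟫ ∂μ := by
  have hinner : (fun ω ↦ ⟪p ω, p' ω⟫) ⟂ᵢ[μ] fun ω ↦ ⟪q ω, q' ω⟫ :=
    hpq.comp (φ := fun x : E × E ↦ ⟪x.1, x.2⟫) (ψ := fun y : F × F ↦ ⟪y.1, y.2⟫)
      (by fun_prop) (by fun_prop)
  simp_rw [TensorProduct.inner_tmul]
  exact hinner.integral_fun_mul_eq_mul_integral (hp.inner hp') (hq.inner hq')

variable [CompleteSpace E]

lemma integral_inner_of_indepFun {X Y : Ω → E} (hXY : X ⟂ᵢ[μ] Y) (hX : Integrable X μ)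
    (hY : Integrable Y μ) : ∫ ω, ⟪X ω, Y ω⟫ ∂μ = ⟪∫ ω, X ω ∂μ, ∫ ω, Y ω ∂μ⟫ :=
  hXY.integral_bilin hX hY (innerSL ℝ)

lemma integral_inner_tmul_tmul_eq_zero_of_indepFun [SecondCountableTopology E]
    [SecondCountableTopology F] {p p' : Ω → E} {q q' : Ω → F} (hpp' : p ⟂ᵢ[μ] p')
    (hpq : (fun ω ↦ (p ω, p' ω)) ⟂ᵢ[μ] fun ω ↦ (q ω, q' ω))
    (hp : Integrable p μ) (hp' : Integrable p' μ)
    (hq : AEStronglyMeasurable q μ) (hq' : AEStronglyMeasurable q' μ)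
    (horth : ⟪∫ ω, p ω ∂μ, ∫ ω, p' ω ∂μ⟫ = 0) :
    ∫ ω, ⟪p ω ⊗ₜ[ℝ] q ω, p' ω ⊗ₜ[ℝ] q' ω⟫ ∂μ = 0 := by
  rw [integral_inner_tmul_tmul_of_indepFun hpq hp.1 hp'.1 hq hq',
    integral_inner_of_indepFun hpp' hp hp', horth, zero_mul]

lemma integral_inner_tmul_of_indepFun [CompleteSpace F] {p : Ω → E} {q : Ω → F} (hpq : p ⟂ᵢ[μ] q)
    (hp : Integrable p μ) (hq : Integrable q μ) (z : E ⊗[ℝ] F) :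
    ∫ ω, ⟪p ω ⊗ₜ[ℝ] q ω, z⟫ ∂μ = ⟪(∫ ω, p ω ∂μ) ⊗ₜ[ℝ] (∫ ω, q ω ∂μ), z⟫ := by
  have htmul : Integrable (fun ω ↦ p ω ⊗ₜ[ℝ] q ω) μ :=
    hpq.integrable_bilin hp hq (TensorProduct.mkL ℝ E F)
  induction z with
  | zero => simp
  | add z w hz hw =>
    simp_rw [inner_add_right]
    rw [integral_add (htmul.inner_const z) (htmul.inner_const w), hz, hw]
  | tmul x y =>
    simp_rw [TensorProduct.inner_tmul, real_inner_comm x, real_inner_comm y]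
    rw [← integral_inner hp, ← integral_inner hq]
    have hinner : (fun ω ↦ ⟪x, p ω⟫) ⟂ᵢ[μ] fun ω ↦ ⟪y, q ω⟫ :=
      hpq.comp (φ := fun z ↦ ⟪x, z⟫) (ψ := fun z ↦ ⟪y, z⟫) (by fun_prop) (by fun_prop)
    exact hinner.integral_fun_mul_eq_mul_integral (hp.1.const_inner) (hq.1.const_inner)

end TensorProduct

section Contraction

open scoped TensorProduct RealInnerProductSpace

variable {Ω E F : Type*} [MeasurableSpace Ω] {μ : Measure Ω} [IsProbabilityMeasure μ]
  [NormedAddCommGroup E] [InnerProductSpace ℝ E] [CompleteSpace E] [SecondCountableTopology E]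
  [MeasurableSpace E] [BorelSpace E]
  [NormedAddCommGroup F] [InnerProductSpace ℝ F] [CompleteSpace F] [SecondCountableTopology F]
  [MeasurableSpace F] [BorelSpace F]

theorem composite_rankR_unbiased_contraction_general {ι : Type*} [Fintype ι] {S : Finset ι}
    {σ : ι → ℝ} {u : ι → E} {v : ι → F} (hu : Orthonormal ℝ u) (hv : Orthonormal ℝ v)
    (hσ : ∀ i ∈ S, ∀ j ∉ S, |σ j| ≤ |σ i|)
    {a b : ι → ℝ} (ha : ∀ i ∈ S, a i ≠ 0) (hb : ∀ i ∈ S, b i ≠ 0)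
    {K₁ K₂ : ℝ} (hK₁ : 0 < K₁) (hK₂ : 0 < K₂) {p : ι → Ω → E} {q : ι → Ω → F}
    (hp : ∀ i ∈ S, MemLp (p i) 2 μ) (hq : ∀ i ∈ S, MemLp (q i) 2 μ)
    (hpp : (S : Set ι).Pairwise fun i j ↦ p i ⟂ᵢ[μ] p j)
    (hpq : ∀ i ∈ S, ∀ j ∈ S, (fun ω ↦ (p i ω, p j ω)) ⟂ᵢ[μ] fun ω ↦ (q i ω, q j ω))
    (hpmean : ∀ i ∈ S, ∫ ω, p i ω ∂μ = a i • u i) (hqmean : ∀ i ∈ S, ∫ ω, q i ω ∂μ = b i • v i)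
    (hpsq : ∀ i ∈ S, ∫ ω, ‖p i ω‖ ^ 2 ∂μ ≤ K₁ * a i ^ 2)
    (hqsq : ∀ i ∈ S, ∫ ω, ‖q i ω‖ ^ 2 ∂μ ≤ K₂ * b i ^ 2) :
    ∫ ω, ‖∑ i ∈ S, (σ i / (a i * b i * K₁ * K₂)) • p i ω ⊗ₜ[ℝ] q i ω -
        ∑ i, σ i • u i ⊗ₜ[ℝ] v i‖ ^ 2 ∂μ
      ≤ (1 - #S / (Fintype.card ι * K₁ * K₂)) * ‖∑ i, σ i • u i ⊗ₜ[ℝ] v i‖ ^ 2 := by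
  have huv : Orthonormal ℝ fun i ↦ u i ⊗ₜ[ℝ] v i := orthonormal_tmul_diag hu hv
  have hpq_self : ∀ i ∈ S, p i ⟂ᵢ[μ] q i := fun i hi ↦
    (hpq i hi i hi).comp measurable_fst measurable_fst
  have hp_int : ∀ i ∈ S, Integrable (p i) μ := fun i hi ↦ (hp i hi).integrable one_le_two
  have hq_int : ∀ i ∈ S, Integrable (q i) μ := fun i hi ↦ (hq i hi).integrable one_le_two
  have horth : (S : Set ι).Pairwise fun i j ↦
      ∫ ω, ⟪p i ω ⊗ₜ[ℝ] q i ω, p j ω ⊗ₜ[ℝ] q j ω⟫ ∂μ = 0 := fun i hi j hj hij ↦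
    integral_inner_tmul_tmul_eq_zero_of_indepFun (hpp hi hj hij) (hpq i hi j hj) (hp_int i hi)
      (hp_int j hj) (hq i hi).1 (hq j hj).1 (by simp [hpmean i hi, hpmean j hj,
        real_inner_smul_left, real_inner_smul_right, hu.inner_eq_zero hij])
  have hinner : ∀ i ∈ S, ∫ ω, ⟪p i ω ⊗ₜ[ℝ] q i ω, ∑ k, σ k • u k ⊗ₜ[ℝ] v k⟫ ∂μ =
      a i * b i * σ i := fun i hi ↦ by
    rw [integral_inner_tmul_of_indepFun (hpq_self i hi) (hp_int i hi) (hq_int i hi), hpmean i hi,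
      hqmean i hi, inner_smul_tmul_smul_left, huv.inner_right_fintype]
  have hsq : ∀ i ∈ S, ∫ ω, ‖p i ω ⊗ₜ[ℝ] q i ω‖ ^ 2 ∂μ ≤ K₁ * K₂ * (a i * b i) ^ 2 := fun i hi ↦ by
    rw [integral_norm_tmul_sq_of_indepFun (hpq_self i hi) (hp i hi).1 (hq i hi).1]
    calc (∫ ω, ‖p i ω‖ ^ 2 ∂μ) * ∫ ω, ‖q i ω‖ ^ 2 ∂μ ≤ (K₁ * a i ^ 2) * (K₂ * b i ^ 2) := by
          gcongr
          exacts [hpsq i hi, hqsq i hi]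
      _ = K₁ * K₂ * (a i * b i) ^ 2 := by ring
  have hnorm : ‖∑ i, σ i • u i ⊗ₜ[ℝ] v i‖ ^ 2 = ∑ i, σ i ^ 2 := by
    simp_rw [← real_inner_self_eq_norm_sq, huv.inner_sum, conj_trivial, sq]
  have htop : #S / (Fintype.card ι * K₁ * K₂) * ∑ i, σ i ^ 2 ≤ (∑ i ∈ S, σ i ^ 2) / (K₁ * K₂) :=
    calc #S / (Fintype.card ι * K₁ * K₂) * ∑ i, σ i ^ 2
        = (#S / Fintype.card ι * ∑ i, σ i ^ 2) / (K₁ * K₂) := by ring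
      _ ≤ (∑ i ∈ S, σ i ^ 2) / (K₁ * K₂) := by
          gcongr
          exact card_div_card_univ_mul_sum_le_sum fun i hi j hj ↦ sq_le_sq.2 (hσ i hi j hj)
  have hbound := integral_norm_sum_smul_sub_sq_le (mul_pos hK₁ hK₂)
    (fun i hi ↦ mul_ne_zero (ha i hi) (hb i hi))
    (fun i hi ↦ memLp_two_tmul_of_indepFun (hpq_self i hi) (hp i hi) (hq i hi)) horth hinner hsq
  simp_rw [← mul_assoc] at hbound
  rw [hnorm] at hbound ⊢
  linarith

end Contraction

section Matrix

open WithLp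
open scoped TensorProduct

variable (m n : Type*) [Fintype m] [Fintype n]

/-- The identification of `ℝᵐ ⊗ ℝⁿ` with the `m × n` matrices, an elementary tensor `x ⊗ₜ y` being
the rank-one matrix `x yᵀ`. It is read off from the coordinates in the tensor product of the
standard bases. -/
noncomputable def tensorToMatrix :
    EuclideanSpace ℝ m ⊗[ℝ] EuclideanSpace ℝ n →ₗ[ℝ] Matrix m n ℝ where
  toFun z := Matrix.of fun i j ↦
    ((EuclideanSpace.basisFun m ℝ).tensorProduct (EuclideanSpace.basisFun n ℝ)).repr z (i, j)
  map_add' z w := by ext; simp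
  map_smul' c z := by ext; simp

variable {m n}

lemma tensorToMatrix_tmul (x : EuclideanSpace ℝ m) (y : EuclideanSpace ℝ n) :
    tensorToMatrix m n (x ⊗ₜ y) = vecMulVec (ofLp x) (ofLp y) := by
  ext i j
  simp [tensorToMatrix, vecMulVec_apply, mul_comm]

lemma tensorToMatrix_sum_smul_toLp_tmul {ι : Type*} (S : Finset ι) (c : ι → ℝ)
    (x : ι → m → ℝ) (y : ι → n → ℝ) :
    tensorToMatrix m n (∑ i ∈ S, c i • toLp 2 (x i) ⊗ₜ toLp 2 (y i)) =
      ∑ i ∈ S, c i • vecMulVec (x i) (y i) := by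
  simp_rw [map_sum, map_smul, tensorToMatrix_tmul]

lemma frobSq_tensorToMatrix {d : ℕ}
    (z : EuclideanSpace ℝ (Fin d) ⊗[ℝ] EuclideanSpace ℝ (Fin d)) :
    frobSq (tensorToMatrix (Fin d) (Fin d) z) = ‖z‖ ^ 2 := by
  let basis := (EuclideanSpace.basisFun (Fin d) ℝ).tensorProduct (EuclideanSpace.basisFun (Fin d) ℝ)
  rw [← basis.repr.norm_map z, EuclideanSpace.real_norm_sq_eq, Fintype.sum_prod_type]
  rfl

end Matrix

section EuclideanSpace

open WithLp

variable {Ω κ κ' : Type*} [MeasurableSpace Ω] {μ : Measure Ω}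

lemma indepFun_toLp {X : Ω → κ → ℝ} {Y : Ω → κ' → ℝ} (hXY : X ⟂ᵢ[μ] Y) :
    (fun ω ↦ toLp 2 (X ω)) ⟂ᵢ[μ] fun ω ↦ toLp 2 (Y ω) :=
  hXY.comp (measurable_toLp 2 _) (measurable_toLp 2 _)

lemma indepFun_prodMk_toLp {X X' : Ω → κ → ℝ} {Y Y' : Ω → κ' → ℝ}
    (hXY : (fun ω ↦ (X ω, X' ω)) ⟂ᵢ[μ] fun ω ↦ (Y ω, Y' ω)) :
    (fun ω ↦ (toLp 2 (X ω), toLp 2 (X' ω))) ⟂ᵢ[μ] fun ω ↦ (toLp 2 (Y ω), toLp 2 (Y' ω)) :=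
  hXY.comp ((measurable_toLp 2 _).prodMap (measurable_toLp 2 _))
    ((measurable_toLp 2 _).prodMap (measurable_toLp 2 _))

variable [Fintype κ]

lemma orthonormal_toLp_iff {ι : Type*} [DecidableEq ι] {u : ι → κ → ℝ} :
    Orthonormal ℝ (fun i ↦ toLp 2 (u i)) ↔ ∀ i j, ∑ s, u i s * u j s = if i = j then 1 else 0 := by
  simp [orthonormal_iff_ite, PiLp.inner_apply, mul_comm]

lemma memLp_two_toLp {f : Ω → κ → ℝ} (hf : AEStronglyMeasurable f μ)
    (hsq : Integrable (fun ω ↦ ∑ s, f ω s ^ 2) μ) : MemLp (fun ω ↦ toLp 2 (f ω)) 2 μ := by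
  rw [memLp_two_iff_integrable_sq_norm
    ((PiLp.continuous_toLp 2 fun _ : κ ↦ ℝ).comp_aestronglyMeasurable hf)]
  simpa only [EuclideanSpace.real_norm_sq_eq] using hsq

lemma integral_toLp (f : Ω → κ → ℝ) : ∫ ω, toLp 2 (f ω) ∂μ = toLp 2 (∫ ω, f ω ∂μ) :=
  (PiLp.continuousLinearEquiv 2 ℝ fun _ : κ ↦ ℝ).symm.integral_comp_comm f

end EuclideanSpace

/-- Proposition 3.2: the composition of the Rank-`R` compressor with unbiased compressors
applied to the (scaled) singular vectors is a contraction compressor with parameter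
`R / (d (ω₁+1)(ω₂+1))`. -/
theorem composite_rankR_unbiased_contraction (d : ℕ)
    {Ω : Type*} [MeasureSpace Ω] [IsProbabilityMeasure (ℙ : Measure Ω)]
    (A : Matrix (Fin d) (Fin d) ℝ)
    (σ : Fin d → ℝ) (u v : Fin d → Fin d → ℝ)
    (hu : ∀ i j, (∑ s, u i s * u j s) = if i = j then (1 : ℝ) else 0)
    (hv : ∀ i j, (∑ s, v i s * v j s) = if i = j then (1 : ℝ) else 0)
    (hσnonneg : ∀ i, 0 ≤ σ i)
    (hσmono : ∀ i j : Fin d, i ≤ j → σ j ≤ σ i)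
    (hA : A = ∑ i, σ i • Matrix.vecMulVec (u i) (v i))
    (R : ℕ) (hR1 : 1 ≤ R) (hRd : R ≤ d)
    (a b : Fin d → ℝ) (ha : ∀ i : Fin d, (i : ℕ) < R → 0 < a i)
    (hb : ∀ i : Fin d, (i : ℕ) < R → 0 < b i)
    (ω₁ ω₂ : ℝ) (hω₁ : 0 ≤ ω₁) (hω₂ : 0 ≤ ω₂)
    (p q : Fin d → Ω → (Fin d → ℝ))
    (hpmeas : ∀ i, Measurable (p i)) (hqmeas : ∀ i, Measurable (q i))
    (hpint : ∀ i, Integrable (p i)) (hqint : ∀ i, Integrable (q i))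
    (hpsqint : ∀ i, Integrable (fun ω => ∑ s, (p i ω s) ^ 2))
    (hqsqint : ∀ i, Integrable (fun ω => ∑ s, (q i ω s) ^ 2))
    (hindep : iIndepFun
      (Sum.elim (fun i : {i : Fin d // (i : ℕ) < R} => p i.1)
                (fun i : {i : Fin d // (i : ℕ) < R} => q i.1)) ℙ)
    (hpmean : ∀ i : Fin d, (i : ℕ) < R → (∫ ω, p i ω) = a i • u i)
    (hqmean : ∀ i : Fin d, (i : ℕ) < R → (∫ ω, q i ω) = b i • v i)
    (hpsq : ∀ i : Fin d, (i : ℕ) < R →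
      (∫ ω, ∑ s, (p i ω s) ^ 2) ≤ (ω₁ + 1) * (a i) ^ 2)
    (hqsq : ∀ i : Fin d, (i : ℕ) < R →
      (∫ ω, ∑ s, (q i ω s) ^ 2) ≤ (ω₂ + 1) * (b i) ^ 2) :
    ∫ ω, frobSq ((∑ i ∈ Finset.univ.filter (fun i : Fin d => (i : ℕ) < R),
        (σ i / (a i * b i * (ω₁ + 1) * (ω₂ + 1))) •
          Matrix.vecMulVec (p i ω) (q i ω)) - A)
      ≤ (1 - (R : ℝ) / (d * (ω₁ + 1) * (ω₂ + 1))) * frobSq A := by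
  have hS : ∀ {i : Fin d}, i ∈ ({i | (i : ℕ) < R} : Finset (Fin d)) ↔ (i : ℕ) < R := by simp
  have hpp : ∀ i j, i.1 < R → j.1 < R → i ≠ j → p i ⟂ᵢ[ℙ] p j := fun i j hi hj hij ↦
    hindep.indepFun (i := .inl ⟨i, hi⟩) (j := .inl ⟨j, hj⟩) (by simpa using hij)
  have hpq : ∀ i j, i.1 < R → j.1 < R →
      (fun ω ↦ (p i ω, p j ω)) ⟂ᵢ[ℙ] fun ω ↦ (q i ω, q j ω) := fun i j hi hj ↦
    hindep.indepFun_prodMk_prodMk (Sum.rec (hpmeas ·) (hqmeas ·)) (.inl ⟨i, hi⟩) (.inl ⟨j, hj⟩)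
      (.inr ⟨i, hi⟩) (.inr ⟨j, hj⟩) (by simp) (by simp) (by simp) (by simp)
  simp_rw [hA, ← tensorToMatrix_sum_smul_toLp_tmul, ← map_sub, frobSq_tensorToMatrix]
  have hbound := composite_rankR_unbiased_contraction_general
    (orthonormal_toLp_iff.2 hu) (orthonormal_toLp_iff.2 hv)
    (fun i hi j hj ↦ abs_le_abs_of_nonneg (hσnonneg j) (hσmono i j (by grind)))
    (fun i hi ↦ (ha i (hS.1 hi)).ne') (fun i hi ↦ (hb i (hS.1 hi)).ne')
    (by positivity : 0 < ω₁ + 1) (by positivity : 0 < ω₂ + 1)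
    (fun i _ ↦ memLp_two_toLp (hpmeas i).aestronglyMeasurable (hpsqint i))
    (fun i _ ↦ memLp_two_toLp (hqmeas i).aestronglyMeasurable (hqsqint i))
    (fun i hi j hj hij ↦ indepFun_toLp (hpp i j (hS.1 hi) (hS.1 hj) hij))
    (fun i hi j hj ↦ indepFun_prodMk_toLp (hpq i j (hS.1 hi) (hS.1 hj)))
    (fun i hi ↦ (integral_toLp _).trans (congrArg _ (hpmean i (hS.1 hi))))
    (fun i hi ↦ (integral_toLp _).trans (congrArg _ (hqmean i (hS.1 hi))))
    (by simpa [EuclideanSpace.real_norm_sq_eq] using hpsq)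
    (by simpa [EuclideanSpace.real_norm_sq_eq] using hqsq)
  rwa [Fin.card_filter_val_lt, min_eq_right hRd, Fintype.card_fin] at hbound
end

section
/- Let (Ω, 𝓕, ℙ) be a probability space, let x, y, z ∈ ℝ^d, let ω ≥ 0 and 0 < η ≤ 1/(ω+1), and let Q : Ω → ℝ^d be a square-integrable random vector with E[Q] = x − z and E‖Q‖² ≤ (ω + 1)‖x − z‖². Then E‖z + ηQ − y‖² ≤ (1 − η)‖z − y‖² + η‖x − y‖². -/
open MeasureTheory ProbabilityTheory

/-!
Write `a = z - y` and `v = x - z`, so that `E Q = v`. Expanding the square gives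
`E ‖a + η Q‖² = ‖a‖² + 2 η ⟪a, v⟫ + η² E ‖Q‖²`, while the claimed bound equals
`‖a‖² + 2 η ⟪a, v⟫ + η ‖v‖²`. The step size is small enough that
`η² E ‖Q‖² ≤ η (η (ω + 1)) ‖v‖² ≤ η ‖v‖²`.
-/

theorem one_sub_mul_norm_sq_add_mul_norm_add_sq {H : Type*} [SeminormedAddCommGroup H]
    [InnerProductSpace ℝ H] (a v : H) (c : ℝ) :
    (1 - c) * ‖a‖ ^ 2 + c * ‖a + v‖ ^ 2 = ‖a‖ ^ 2 + 2 * c * inner ℝ a v + c * ‖v‖ ^ 2 := by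
  rw [norm_add_sq_real]
  ring

section Integral

variable {Ω H : Type*} [MeasurableSpace Ω] {μ : Measure Ω}
  [NormedAddCommGroup H] [InnerProductSpace ℝ H]

theorem integral_norm_add_sq_real {X Y : Ω → H} (hX : MemLp X 2 μ) (hY : MemLp Y 2 μ) :
    ∫ t, ‖X t + Y t‖ ^ 2 ∂μ =
      ∫ t, ‖X t‖ ^ 2 ∂μ + 2 * ∫ t, inner ℝ (X t) (Y t) ∂μ + ∫ t, ‖Y t‖ ^ 2 ∂μ := by
  have hXsq : Integrable (fun t => ‖X t‖ ^ 2) μ := hX.integrable_norm_pow two_ne_zero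
  have hYsq : Integrable (fun t => ‖Y t‖ ^ 2) μ := hY.integrable_norm_pow two_ne_zero
  have hXY : Integrable (fun t => 2 * inner ℝ (X t) (Y t)) μ :=
    (memLp_one_iff_integrable.1 ((innerSL ℝ).memLp_of_bilin 1 hX hY)).const_mul 2
  simp_rw [norm_add_sq_real]
  rw [integral_add (hXsq.fun_add hXY) hYsq, integral_add hXsq hXY, integral_const_mul]

variable [CompleteSpace H] [IsProbabilityMeasure μ]

theorem integral_norm_const_add_sq_real {X : Ω → H} (a : H) (hX : MemLp X 2 μ) :
    ∫ t, ‖a + X t‖ ^ 2 ∂μ =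
      ‖a‖ ^ 2 + 2 * inner ℝ a (∫ t, X t ∂μ) + ∫ t, ‖X t‖ ^ 2 ∂μ := by
  rw [integral_norm_add_sq_real (memLp_const a) hX,
    integral_inner (hX.integrable one_le_two), integral_const, probReal_univ, one_smul]

theorem integral_norm_const_add_smul_sq_real {X : Ω → H} (a : H) (c : ℝ) (hX : MemLp X 2 μ) :
    ∫ t, ‖a + c • X t‖ ^ 2 ∂μ =
      ‖a‖ ^ 2 + 2 * c * inner ℝ a (∫ t, X t ∂μ) + c ^ 2 * ∫ t, ‖X t‖ ^ 2 ∂μ := by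
  have hsq : ∫ t, ‖c • X t‖ ^ 2 ∂μ = c ^ 2 * ∫ t, ‖X t‖ ^ 2 ∂μ := by
    simp_rw [norm_smul, mul_pow, Real.norm_eq_abs, sq_abs, integral_const_mul]
  have hexpand := integral_norm_const_add_sq_real a (hX.const_smul c)
  simp only [Pi.smul_apply] at hexpand
  rw [hexpand, hsq, integral_smul, inner_smul_right, mul_assoc]

theorem unbiased_compressor_step_general
    {Q : Ω → H} {x y z : H} {ω η : ℝ} (hη0 : 0 ≤ η) (hη1 : η * (ω + 1) ≤ 1)
    (hQ : MemLp Q 2 μ) (hQmean : ∫ t, Q t ∂μ = x - z)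
    (hQsq : ∫ t, ‖Q t‖ ^ 2 ∂μ ≤ (ω + 1) * ‖x - z‖ ^ 2) :
    ∫ t, ‖z + η • Q t - y‖ ^ 2 ∂μ ≤ (1 - η) * ‖z - y‖ ^ 2 + η * ‖x - y‖ ^ 2 := by
  have hsecond : η ^ 2 * ∫ t, ‖Q t‖ ^ 2 ∂μ ≤ η * ‖x - z‖ ^ 2 :=
    calc η ^ 2 * ∫ t, ‖Q t‖ ^ 2 ∂μ
      _ ≤ η ^ 2 * ((ω + 1) * ‖x - z‖ ^ 2) := by gcongr
      _ = η * (η * (ω + 1)) * ‖x - z‖ ^ 2 := by ring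
      _ ≤ η * 1 * ‖x - z‖ ^ 2 := by gcongr
      _ = η * ‖x - z‖ ^ 2 := by rw [mul_one]
  calc ∫ t, ‖z + η • Q t - y‖ ^ 2 ∂μ
    _ = ∫ t, ‖z - y + η • Q t‖ ^ 2 ∂μ := by simp_rw [add_sub_right_comm]
    _ = ‖z - y‖ ^ 2 + 2 * η * inner ℝ (z - y) (x - z) + η ^ 2 * ∫ t, ‖Q t‖ ^ 2 ∂μ := by
      rw [integral_norm_const_add_smul_sq_real _ _ hQ, hQmean]
    _ ≤ ‖z - y‖ ^ 2 + 2 * η * inner ℝ (z - y) (x - z) + η * ‖x - z‖ ^ 2 := by gcongr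
    _ = (1 - η) * ‖z - y‖ ^ 2 + η * ‖x - y‖ ^ 2 := by
      rw [← one_sub_mul_norm_sq_add_mul_norm_add_sq, sub_add_sub_cancel']

end Integral

/-- Lemma C.2 (i): one step with an unbiased compressor with variance parameter `ω`
and stepsize `η ≤ 1/(ω+1)`. -/
theorem unbiased_compressor_step (d : ℕ)
    {Ω : Type*} [MeasureSpace Ω] [IsProbabilityMeasure (ℙ : Measure Ω)]
    (x y z : EuclideanSpace ℝ (Fin d))
    (ω : ℝ) (hω : 0 ≤ ω) (η : ℝ) (hη0 : 0 < η) (hη1 : η ≤ 1 / (ω + 1))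
    (Q : Ω → EuclideanSpace ℝ (Fin d))
    (hQint : Integrable Q)
    (hQsqint : Integrable (fun t => ‖Q t‖ ^ 2))
    (hQmean : (∫ t, Q t) = x - z)
    (hQsq : (∫ t, ‖Q t‖ ^ 2) ≤ (ω + 1) * ‖x - z‖ ^ 2) :
    (∫ t, ‖z + η • Q t - y‖ ^ 2) ≤ (1 - η) * ‖z - y‖ ^ 2 + η * ‖x - y‖ ^ 2 :=
  unbiased_compressor_step_general hη0.le ((le_div_iff₀ (by positivity)).1 hη1)
    ((memLp_two_iff_integrable_sq_norm hQint.1).2 hQsqint) hQmean hQsq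
end

section
/- Let (Ω, 𝓕, ℙ) be a probability space, let x, y, z ∈ ℝ^d, let 0 < δ ≤ 1, and let Q : Ω → ℝ^d be a square-integrable random vector with E‖Q − (x − z)‖² ≤ (1 − δ)‖x − z‖². Then E‖z + Q − y‖² ≤ (1 − δ/4)‖z − y‖² + (6/δ − 7/2)‖x − y‖². -/
open MeasureTheory ProbabilityTheory

/-!
Write `z + Q - y = (Q - (x - z)) + (x - y)` and `x - z = (x - y) - (z - y)`, and split both sums by
Young's inequality `‖a + b‖² ≤ (1 + c)‖a‖² + (1 + c⁻¹)‖b‖²` with the same weight `c`. The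
coefficient of `‖z - y‖²` becomes `(1 + c)²(1 - δ)`, which forces `c` to be small, while that of
`‖x - y‖²` contains `1 + c⁻¹`; the weight `c = δ / (3 - 2δ)` meets both target constants.
-/

theorem norm_add_sq_le_young {E : Type*} [SeminormedAddCommGroup E] {c : ℝ} (hc : 0 < c)
    (a b : E) :
    ‖a + b‖ ^ 2 ≤ (1 + c) * ‖a‖ ^ 2 + (1 + c⁻¹) * ‖b‖ ^ 2 :=
  calc
    ‖a + b‖ ^ 2 ≤ (‖a‖ + ‖b‖) ^ 2 := by gcongr; exact norm_add_le a b
    _ = ‖a‖ ^ 2 + 2 * ‖a‖ * ‖b‖ + ‖b‖ ^ 2 := add_sq _ _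
    _ ≤ ‖a‖ ^ 2 + (c * ‖a‖ ^ 2 + c⁻¹ * ‖b‖ ^ 2) + ‖b‖ ^ 2 := by
      gcongr; exact two_mul_le_add_mul_sq hc
    _ = (1 + c) * ‖a‖ ^ 2 + (1 + c⁻¹) * ‖b‖ ^ 2 := by ring

section SquareIntegrable

variable {E : Type*} [NormedAddCommGroup E] {Ω : Type*} [MeasurableSpace Ω] {μ : Measure Ω}
  {f g : Ω → E}

theorem integral_norm_add_sq_le_young {c : ℝ} (hc : 0 < c) (hf : MemLp f 2 μ)
    (hg : MemLp g 2 μ) :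
    ∫ t, ‖f t + g t‖ ^ 2 ∂μ ≤
      (1 + c) * ∫ t, ‖f t‖ ^ 2 ∂μ + (1 + c⁻¹) * ∫ t, ‖g t‖ ^ 2 ∂μ := by
  have hf_sq : Integrable (fun t ↦ (1 + c) * ‖f t‖ ^ 2) μ :=
    (hf.integrable_norm_pow two_ne_zero).const_mul _
  have hg_sq : Integrable (fun t ↦ (1 + c⁻¹) * ‖g t‖ ^ 2) μ :=
    (hg.integrable_norm_pow two_ne_zero).const_mul _
  calc
    ∫ t, ‖f t + g t‖ ^ 2 ∂μ
      ≤ ∫ t, ((1 + c) * ‖f t‖ ^ 2 + (1 + c⁻¹) * ‖g t‖ ^ 2) ∂μ :=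
        integral_mono ((hf.add hg).integrable_norm_pow two_ne_zero) (hf_sq.add hg_sq)
          fun t ↦ norm_add_sq_le_young hc (f t) (g t)
    _ = (1 + c) * ∫ t, ‖f t‖ ^ 2 ∂μ + (1 + c⁻¹) * ∫ t, ‖g t‖ ^ 2 ∂μ := by
      rw [integral_add hf_sq hg_sq, integral_const_mul, integral_const_mul]

theorem memLp_two_of_integrable_norm_sub_sq [IsFiniteMeasure μ] {a : E}
    (hf : AEStronglyMeasurable f μ) (hfa : Integrable (fun t ↦ ‖f t - a‖ ^ 2) μ) :
    MemLp f 2 μ := by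
  have hsub : MemLp (fun t ↦ f t - a) 2 μ :=
    (memLp_two_iff_integrable_sq_norm (hf.sub aestronglyMeasurable_const)).2 hfa
  simpa [Pi.add_def] using hsub.add (memLp_const a)

end SquareIntegrable

theorem integral_norm_compressor_step_sq_le {E : Type*} [NormedAddCommGroup E]
    {Ω : Type*} [MeasurableSpace Ω] {μ : Measure Ω} [IsProbabilityMeasure μ]
    {x z : E} (y : E) {c r : ℝ} (hc : 0 < c) (hr : 0 ≤ r) {Q : Ω → E} (hQ : MemLp Q 2 μ)
    (hQcontr : ∫ t, ‖Q t - (x - z)‖ ^ 2 ∂μ ≤ r * ‖x - z‖ ^ 2) :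
    ∫ t, ‖z + Q t - y‖ ^ 2 ∂μ ≤
      (1 + c) ^ 2 * r * ‖z - y‖ ^ 2 + (1 + c⁻¹) * ((1 + c) * r + 1) * ‖x - y‖ ^ 2 := by
  have hsplit (t : Ω) : z + Q t - y = (Q t - (x - z)) + (x - y) := by abel
  have hxz : ‖x - z‖ ^ 2 ≤ (1 + c) * ‖z - y‖ ^ 2 + (1 + c⁻¹) * ‖x - y‖ ^ 2 := by
    simpa [norm_sub_rev] using norm_add_sq_le_young hc (y - z) (x - y)
  calc
    ∫ t, ‖z + Q t - y‖ ^ 2 ∂μ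
      ≤ (1 + c) * ∫ t, ‖Q t - (x - z)‖ ^ 2 ∂μ + (1 + c⁻¹) * ‖x - y‖ ^ 2 := by
        simpa [hsplit] using
          integral_norm_add_sq_le_young hc (hQ.sub (memLp_const (x - z))) (memLp_const (x - y))
    _ ≤ (1 + c) * (r * ‖x - z‖ ^ 2) + (1 + c⁻¹) * ‖x - y‖ ^ 2 := by gcongr
    _ ≤ (1 + c) * (r * ((1 + c) * ‖z - y‖ ^ 2 + (1 + c⁻¹) * ‖x - y‖ ^ 2))
          + (1 + c⁻¹) * ‖x - y‖ ^ 2 := by gcongr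
    _ = (1 + c) ^ 2 * r * ‖z - y‖ ^ 2 + (1 + c⁻¹) * ((1 + c) * r + 1) * ‖x - y‖ ^ 2 := by ring

/-- The weight `c = δ / (3 - 2δ)` in Young's inequality that is used for a contraction compressor
with parameter `δ`; it is chosen so that `1 + c⁻¹ = 3 / δ - 1`. -/
noncomputable def youngWeight (δ : ℝ) : ℝ := δ / (3 - 2 * δ)

section YoungWeight

variable {δ : ℝ}

theorem youngWeight_pos (hδ0 : 0 < δ) (hδ1 : δ ≤ 1) : 0 < youngWeight δ :=
  div_pos hδ0 (by linarith)

theorem one_add_youngWeight (hδ : 3 - 2 * δ ≠ 0) :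
    1 + youngWeight δ = (3 - δ) / (3 - 2 * δ) := by
  rw [youngWeight, one_add_div hδ]
  ring

theorem one_add_inv_youngWeight (hδ : δ ≠ 0) : 1 + (youngWeight δ)⁻¹ = (3 - δ) / δ := by
  rw [youngWeight, inv_div]
  field_simp
  ring

theorem one_add_youngWeight_sq_mul_le (hδ0 : 0 < δ) (hδ1 : δ ≤ 1) :
    (1 + youngWeight δ) ^ 2 * (1 - δ) ≤ 1 - δ / 4 := by
  have hden : 0 < 3 - 2 * δ := by linarith
  rw [one_add_youngWeight hden.ne', div_pow, div_mul_eq_mul_div, div_le_iff₀ (by positivity)]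
  linarith

theorem one_add_inv_youngWeight_mul_le (hδ0 : 0 < δ) (hδ1 : δ ≤ 1) :
    (1 + (youngWeight δ)⁻¹) * ((1 + youngWeight δ) * (1 - δ) + 1) ≤ 6 / δ - 7 / 2 := by
  have hden : 0 < 3 - 2 * δ := by linarith
  have hfactor : (1 + youngWeight δ) * (1 - δ) + 1 = (6 - 6 * δ + δ ^ 2) / (3 - 2 * δ) := by
    rw [one_add_youngWeight hden.ne', div_mul_eq_mul_div, div_add_one hden.ne']
    ring
  have hgap : 0 ≤ δ ^ 2 * (2 * (1 - δ) ^ 2 + 1) := by positivity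
  rw [one_add_inv_youngWeight hδ0.ne', hfactor, div_mul_div_comm,
    div_sub_div _ _ hδ0.ne' two_ne_zero, div_le_div_iff₀ (by positivity) (by positivity)]
  linarith

end YoungWeight

theorem contraction_compressor_step_general {E : Type*} [NormedAddCommGroup E]
    {Ω : Type*} [MeasurableSpace Ω] {μ : Measure Ω} [IsProbabilityMeasure μ]
    {x z : E} (y : E) {δ : ℝ} (hδ0 : 0 < δ) (hδ1 : δ ≤ 1) {Q : Ω → E} (hQ : MemLp Q 2 μ)
    (hQcontr : ∫ t, ‖Q t - (x - z)‖ ^ 2 ∂μ ≤ (1 - δ) * ‖x - z‖ ^ 2) :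
    ∫ t, ‖z + Q t - y‖ ^ 2 ∂μ ≤
      (1 - δ / 4) * ‖z - y‖ ^ 2 + (6 / δ - 7 / 2) * ‖x - y‖ ^ 2 := by
  refine (integral_norm_compressor_step_sq_le y (youngWeight_pos hδ0 hδ1) (sub_nonneg.2 hδ1) hQ
    hQcontr).trans ?_
  gcongr
  · exact one_add_youngWeight_sq_mul_le hδ0 hδ1
  · exact one_add_inv_youngWeight_mul_le hδ0 hδ1

/-- Lemma C.2 (ii): one step with a contraction compressor with parameter `δ`
and stepsize `η = 1`. -/
theorem contraction_compressor_step (d : ℕ)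
    {Ω : Type*} [MeasureSpace Ω] [IsProbabilityMeasure (ℙ : Measure Ω)]
    (x y z : EuclideanSpace ℝ (Fin d))
    (δ : ℝ) (hδ0 : 0 < δ) (hδ1 : δ ≤ 1)
    (Q : Ω → EuclideanSpace ℝ (Fin d))
    (hQint : Integrable Q)
    (hQsqint : Integrable (fun t => ‖Q t - (x - z)‖ ^ 2))
    (hQcontr : (∫ t, ‖Q t - (x - z)‖ ^ 2) ≤ (1 - δ) * ‖x - z‖ ^ 2) :
    (∫ t, ‖z + Q t - y‖ ^ 2)
      ≤ (1 - δ / 4) * ‖z - y‖ ^ 2 + (6 / δ - 7 / 2) * ‖x - y‖ ^ 2 := by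
  have hQ : MemLp Q 2 ℙ := memLp_two_of_integrable_norm_sub_sq hQint.1 hQsqint
  exact contraction_compressor_step_general y hδ0 hδ1 hQ hQcontr
end

section
/- Let (Ω, 𝓕, ℙ) be a probability space, let G : ℝ^d → ℝ^{d×d} satisfy ‖G(y) − G(z)‖_F ≤ M₁‖y − z‖ for all y, z ∈ ℝ^d, let L ∈ ℝ^{d×d}, let y, z ∈ ℝ^d, let ω ≥ 0 and 0 < α ≤ 1/(ω+1), and let S : Ω → ℝ^{d×d} be a square-integrable random matrix with E[S] = G(y) − L and E‖S‖_F² ≤ (ω + 1)‖G(y) − L‖_F². Then E‖L + αS − G(z)‖_F² ≤ (1 − α)‖L − G(z)‖_F² + α M₁² ‖y − z‖². -/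
/-!
Under the Frobenius norm the random matrix `S` is a square-integrable random vector `X` in a
Hilbert space. Expanding the square for deterministic `a` gives
`E‖a + αX‖² = ‖a‖² + 2α⟪a, E X⟫ + α² E‖X‖²`. The step size condition yields `α E‖X‖² ≤ ‖E X‖²`, so
the right-hand side is at most `(1 - α)‖a‖² + α‖a + E X‖²`. For `a = L - G z` and `E X = G y - L`,
the point `a + E X` is `G y - G z`, which the Lipschitz condition controls.
-/

open Matrix MeasureTheory ProbabilityTheory

/-- Frobenius norm. -/
noncomputable def frobNorm {d : ℕ} (M : Matrix (Fin d) (Fin d) ℝ) : ℝ :=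
  Real.sqrt (frobSq M)

section RandomVector

variable {Ω E : Type*} [MeasurableSpace Ω] {μ : Measure Ω} [IsProbabilityMeasure μ]
  [NormedAddCommGroup E] [InnerProductSpace ℝ E] [CompleteSpace E] {X : Ω → E}

open scoped RealInnerProductSpace

theorem integral_norm_sq_add_smul (hX : MemLp X 2 μ) (a : E) (c : ℝ) :
    ∫ t, ‖a + c • X t‖ ^ 2 ∂μ =
      ‖a‖ ^ 2 + 2 * c * ⟪a, ∫ t, X t ∂μ⟫ + c ^ 2 * ∫ t, ‖X t‖ ^ 2 ∂μ := by
  have hX₁ : Integrable X μ := hX.integrable one_le_two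
  have hcross : Integrable (fun t => 2 * c * ⟪a, X t⟫) μ := (hX₁.const_inner a).const_mul _
  have haffine : Integrable (fun t => ‖a‖ ^ 2 + 2 * c * ⟪a, X t⟫) μ :=
    (integrable_const _).add hcross
  have hsq : Integrable (fun t => c ^ 2 * ‖X t‖ ^ 2) μ :=
    (hX.integrable_norm_pow two_ne_zero).const_mul _
  have hexpand (t : Ω) :
      ‖a + c • X t‖ ^ 2 = ‖a‖ ^ 2 + 2 * c * ⟪a, X t⟫ + c ^ 2 * ‖X t‖ ^ 2 := by
    rw [norm_add_sq_real, real_inner_smul_right, norm_smul, mul_pow, Real.norm_eq_abs, sq_abs,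
      mul_assoc]
  calc ∫ t, ‖a + c • X t‖ ^ 2 ∂μ
      = ∫ t, (‖a‖ ^ 2 + 2 * c * ⟪a, X t⟫ + c ^ 2 * ‖X t‖ ^ 2) ∂μ := by simp only [hexpand]
    _ = ‖a‖ ^ 2 + 2 * c * ∫ t, ⟪a, X t⟫ ∂μ + c ^ 2 * ∫ t, ‖X t‖ ^ 2 ∂μ := by
        rw [integral_add haffine hsq, integral_add (integrable_const _) hcross,
          integral_const_mul, integral_const_mul, integral_const, probReal_univ, one_smul]
    _ = ‖a‖ ^ 2 + 2 * c * ⟪a, ∫ t, X t ∂μ⟫ + c ^ 2 * ∫ t, ‖X t‖ ^ 2 ∂μ := by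
        rw [integral_inner hX₁]

theorem integral_norm_sq_add_smul_le (hX : MemLp X 2 μ) (a : E) {c : ℝ} (hc : 0 ≤ c)
    (hX_sq : c * ∫ t, ‖X t‖ ^ 2 ∂μ ≤ ‖∫ t, X t ∂μ‖ ^ 2) :
    ∫ t, ‖a + c • X t‖ ^ 2 ∂μ ≤ (1 - c) * ‖a‖ ^ 2 + c * ‖a + ∫ t, X t ∂μ‖ ^ 2 := by
  calc ∫ t, ‖a + c • X t‖ ^ 2 ∂μ
      = ‖a‖ ^ 2 + 2 * c * ⟪a, ∫ t, X t ∂μ⟫ + c * (c * ∫ t, ‖X t‖ ^ 2 ∂μ) := by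
        rw [integral_norm_sq_add_smul hX]; ring
    _ ≤ ‖a‖ ^ 2 + 2 * c * ⟪a, ∫ t, X t ∂μ⟫ + c * ‖∫ t, X t ∂μ‖ ^ 2 := by gcongr
    _ = (1 - c) * ‖a‖ ^ 2 + c * ‖a + ∫ t, X t ∂μ‖ ^ 2 := by rw [norm_add_sq_real]; ring

theorem hessian_learning_unbiased_step_general {Y : Type*} [PseudoMetricSpace Y] {M₁ : ℝ}
    {G : Y → E} (hG : ∀ y z, ‖G y - G z‖ ≤ M₁ * dist y z) (L : E) (y z : Y) {ω α : ℝ}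
    (hα : 0 ≤ α) (hαω : α * (ω + 1) ≤ 1) (hX : MemLp X 2 μ) (hX_mean : ∫ t, X t ∂μ = G y - L)
    (hX_sq : ∫ t, ‖X t‖ ^ 2 ∂μ ≤ (ω + 1) * ‖G y - L‖ ^ 2) :
    ∫ t, ‖L + α • X t - G z‖ ^ 2 ∂μ ≤
      (1 - α) * ‖L - G z‖ ^ 2 + α * M₁ ^ 2 * dist y z ^ 2 := by
  have hstep : α * ∫ t, ‖X t‖ ^ 2 ∂μ ≤ ‖∫ t, X t ∂μ‖ ^ 2 := by
    calc α * ∫ t, ‖X t‖ ^ 2 ∂μ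
        ≤ α * ((ω + 1) * ‖G y - L‖ ^ 2) := by gcongr
      _ = α * (ω + 1) * ‖G y - L‖ ^ 2 := (mul_assoc _ _ _).symm
      _ ≤ ‖G y - L‖ ^ 2 := mul_le_of_le_one_left (sq_nonneg _) hαω
      _ = ‖∫ t, X t ∂μ‖ ^ 2 := by rw [hX_mean]
  calc ∫ t, ‖L + α • X t - G z‖ ^ 2 ∂μ
      = ∫ t, ‖L - G z + α • X t‖ ^ 2 ∂μ := by simp only [add_sub_right_comm]
    _ ≤ (1 - α) * ‖L - G z‖ ^ 2 + α * ‖L - G z + ∫ t, X t ∂μ‖ ^ 2 :=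
      integral_norm_sq_add_smul_le hX _ hα hstep
    _ = (1 - α) * ‖L - G z‖ ^ 2 + α * ‖G y - G z‖ ^ 2 := by
      rw [hX_mean, add_comm (L - G z), sub_add_sub_cancel]
    _ ≤ (1 - α) * ‖L - G z‖ ^ 2 + α * (M₁ * dist y z) ^ 2 := by gcongr; exact hG y z
    _ = (1 - α) * ‖L - G z‖ ^ 2 + α * M₁ ^ 2 * dist y z ^ 2 := by ring

end RandomVector

section Vectorization

variable {m n Ω : Type*} [Fintype m] [Fintype n] [MeasurableSpace Ω] {μ : Measure Ω}
  {S : Ω → Matrix m n ℝ}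

theorem integrable_toLp_vec (hS : ∀ i j, Integrable (fun t => S t i j) μ) :
    Integrable (fun t => WithLp.toLp 2 (S t).vec) μ :=
  Integrable.of_eval_piLp fun p => hS p.2 p.1

theorem integral_toLp_vec (hS : ∀ i j, Integrable (fun t => S t i j) μ) {M : Matrix m n ℝ}
    (hM : ∀ i j, ∫ t, S t i j ∂μ = M i j) :
    ∫ t, WithLp.toLp 2 (S t).vec ∂μ = WithLp.toLp 2 M.vec := by
  ext p
  rw [eval_integral_piLp fun p => hS p.2 p.1]
  exact hM p.2 p.1

end Vectorization

section Frobenius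

variable {d : ℕ}

theorem frobSq_eq_norm_toLp_vec_sq (M : Matrix (Fin d) (Fin d) ℝ) :
    frobSq M = ‖WithLp.toLp 2 M.vec‖ ^ 2 := by
  rw [EuclideanSpace.real_norm_sq_eq, Fintype.sum_prod_type_right]
  rfl

theorem frobNorm_eq_norm_toLp_vec (M : Matrix (Fin d) (Fin d) ℝ) :
    frobNorm M = ‖WithLp.toLp 2 M.vec‖ := by
  rw [frobNorm, frobSq_eq_norm_toLp_vec_sq, Real.sqrt_sq (norm_nonneg _)]

theorem memLp_two_toLp_vec {Ω : Type*} [MeasurableSpace Ω] {μ : Measure Ω}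
    {S : Ω → Matrix (Fin d) (Fin d) ℝ} (hS : ∀ i j, Integrable (fun t => S t i j) μ)
    (hS_sq : Integrable (fun t => frobSq (S t)) μ) :
    MemLp (fun t => WithLp.toLp 2 (S t).vec) 2 μ := by
  rw [memLp_two_iff_integrable_sq_norm (integrable_toLp_vec hS).aestronglyMeasurable]
  simpa only [frobSq_eq_norm_toLp_vec_sq] using hS_sq

end Frobenius

/-- Lemma C.3 (i): Hessian-coefficient learning step with an unbiased compressor with
variance parameter `ω` and stepsize `α ≤ 1/(ω+1)`. -/
theorem hessian_learning_unbiased_step (d : ℕ)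
    {Ω : Type*} [MeasureSpace Ω] [IsProbabilityMeasure (ℙ : Measure Ω)]
    (M₁ : ℝ) (G : EuclideanSpace ℝ (Fin d) → Matrix (Fin d) (Fin d) ℝ)
    (hG : ∀ y z, frobNorm (G y - G z) ≤ M₁ * ‖y - z‖)
    (L : Matrix (Fin d) (Fin d) ℝ) (y z : EuclideanSpace ℝ (Fin d))
    (ω : ℝ) (hω : 0 ≤ ω) (α : ℝ) (hα0 : 0 < α) (hα1 : α ≤ 1 / (ω + 1))
    (S : Ω → Matrix (Fin d) (Fin d) ℝ)
    (hSint : ∀ j l, Integrable (fun t => S t j l))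
    (hSsqint : Integrable (fun t => frobSq (S t)))
    (hSmean : ∀ j l, (∫ t, S t j l) = (G y - L) j l)
    (hSsq : (∫ t, frobSq (S t)) ≤ (ω + 1) * frobSq (G y - L)) :
    (∫ t, frobSq (L + α • S t - G z))
      ≤ (1 - α) * frobSq (L - G z) + α * M₁ ^ 2 * ‖y - z‖ ^ 2 := by
  have hαω : α * (ω + 1) ≤ 1 := (le_div_iff₀ (by positivity)).1 hα1
  have hvec := memLp_two_toLp_vec hSint hSsqint
  have hmean := integral_toLp_vec hSint hSmean
  simp only [frobNorm_eq_norm_toLp_vec, frobSq_eq_norm_toLp_vec_sq, vec_add, vec_sub, vec_smul,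
    WithLp.toLp_add, WithLp.toLp_sub, WithLp.toLp_smul, ← dist_eq_norm y z] at hG hSsq hmean ⊢
  exact hessian_learning_unbiased_step_general (G := fun x => WithLp.toLp 2 (G x).vec)
    (by simpa only [dist_eq_norm] using hG) _ y z hα0.le hαω hvec hmean hSsq
end

section
/- Let f : ℝ^d → ℝ be twice continuously differentiable with ∇f(x*) = 0 for some x* ∈ ℝ^d, and suppose ‖∇²f(x) − ∇²f(y)‖ ≤ H‖x − y‖ (spectral norm) for all x, y. Let μ > 0 and let Ĥ be a symmetric d×d matrix with Ĥ ⪰ μI. Then Ĥ is invertible and the Newton-type step x⁺ := z − Ĥ⁻¹∇f(z) satisfies, for every z ∈ ℝ^d, ‖x⁺ − x*‖² ≤ (1/μ²)·( (H²/2)‖z − x*‖⁴ + 2‖Ĥ − ∇²f(x*)‖_F² ‖z − x*‖² ). -/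
open Matrix

/-- Spectral norm (operator 2-norm) of a matrix. -/
noncomputable def specNorm {d : ℕ} (M : Matrix (Fin d) (Fin d) ℝ) : ℝ :=
  ‖Matrix.toEuclideanCLM (𝕜 := ℝ) M‖

/-- The Hessian matrix of `f` at `x` (the derivative of the gradient). -/
noncomputable def hess {d : ℕ} (f : EuclideanSpace ℝ (Fin d) → ℝ)
    (x : EuclideanSpace ℝ (Fin d)) : Matrix (Fin d) (Fin d) ℝ :=
  fun j l => fderiv ℝ (gradient f) x (EuclideanSpace.single l 1) j

/-!
With `A` the operator that replaces the derivative and `x⁺ = z - A⁻¹ (G z)`, the equation `G x₀ = 0`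
gives `A (x⁺ - x₀) = (A - G' x₀) (z - x₀) - (G z - G x₀ - G' x₀ (z - x₀))`. The second term is a
Taylor remainder, at most `L / 2 * ‖z - x₀‖ ^ 2`. Coercivity of `A` yields both its invertibility
and `‖A⁻¹‖ ≤ 1 / μ`, and the squared bound follows from `(a + b) ^ 2 ≤ 2 * (a ^ 2 + b ^ 2)`.
-/

open scoped NNReal RealInnerProductSpace

section Calculus

variable {E F : Type*} [NormedAddCommGroup E] [NormedSpace ℝ E]
  [NormedAddCommGroup F] [NormedSpace ℝ F]
  {G : E → F} {G' : E → E →L[ℝ] F} {s : Set E} {x₀ z : E} {L : ℝ}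

lemma norm_image_sub_sub_le_of_norm_hasFDerivWithin_sub_le (hs : Convex ℝ s)
    (hG : ∀ x ∈ s, HasFDerivWithinAt G (G' x) s x) (hx₀ : x₀ ∈ s)
    (hL : ∀ x ∈ s, ‖G' x - G' x₀‖ ≤ L * ‖x - x₀‖) (hz : z ∈ s) :
    ‖G z - G x₀ - G' x₀ (z - x₀)‖ ≤ L / 2 * ‖z - x₀‖ ^ 2 := by
  let γ : ℝ → E := AffineMap.lineMap x₀ z
  let r : E → F := fun x ↦ G x - G' x₀ x
  have hγ : Set.MapsTo γ (Set.Icc 0 1) s := fun t ht ↦ hs.lineMap_mem hx₀ hz ht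
  have hγ_sub (t : ℝ) : γ t - x₀ = t • (z - x₀) := AffineMap.lineMap_vsub_left x₀ z t
  have hr_deriv : ∀ t ∈ Set.Icc (0 : ℝ) 1,
      HasDerivWithinAt (fun t ↦ r (γ t) - r x₀) ((G' (γ t) - G' x₀) (z - x₀))
        (Set.Icc 0 1) t := fun t ht ↦
    (((hG _ (hγ ht)).sub (G' x₀).hasFDerivWithinAt).comp_hasDerivWithinAt t
      AffineMap.hasDerivWithinAt_lineMap hγ).sub_const _
  have hr_bound : ∀ t ∈ Set.Ico (0 : ℝ) 1,
      ‖(G' (γ t) - G' x₀) (z - x₀)‖ ≤ L / 2 * ‖z - x₀‖ ^ 2 * (2 * t) := fun t ht ↦ calc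
    _ ≤ ‖G' (γ t) - G' x₀‖ * ‖z - x₀‖ := ContinuousLinearMap.le_opNorm _ _
    _ ≤ L * ‖γ t - x₀‖ * ‖z - x₀‖ := by gcongr; exact hL _ (hγ (Set.Ico_subset_Icc_self ht))
    _ = L / 2 * ‖z - x₀‖ ^ 2 * (2 * t) := by
      rw [hγ_sub, norm_smul, Real.norm_of_nonneg ht.1]; ring
  have hB (t : ℝ) : HasDerivAt (fun t ↦ L / 2 * ‖z - x₀‖ ^ 2 * t ^ 2)
      (L / 2 * ‖z - x₀‖ ^ 2 * (2 * t)) t := by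
    simpa using (hasDerivAt_pow 2 t).const_mul (L / 2 * ‖z - x₀‖ ^ 2)
  have hr := image_norm_le_of_norm_deriv_right_le_deriv_boundary
    (fun t ht ↦ (hr_deriv t ht).continuousWithinAt)
    (fun t ht ↦ (hr_deriv t (Set.Ico_subset_Icc_self ht)).mono_of_mem_nhdsWithin
      (Icc_mem_nhdsGE_of_mem ht))
    (by simp [γ]) hB hr_bound (Set.right_mem_Icc.2 zero_le_one)
  calc ‖G z - G x₀ - G' x₀ (z - x₀)‖ = ‖r (γ 1) - r x₀‖ := by
        simp only [r, γ, AffineMap.lineMap_apply_one, map_sub]; congr 1; abel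
    _ ≤ L / 2 * ‖z - x₀‖ ^ 2 := by simpa using hr

lemma norm_newton_step_sub_root_le (hs : Convex ℝ s)
    (hG : ∀ x ∈ s, HasFDerivWithinAt G (G' x) s x) (hx₀ : x₀ ∈ s) (hroot : G x₀ = 0)
    (hL : ∀ x ∈ s, ‖G' x - G' x₀‖ ≤ L * ‖x - x₀‖)
    {A : E →L[ℝ] F} {K : ℝ≥0} (hA : AntilipschitzWith K A) (hz : z ∈ s)
    {w : E} (hw : A w = G z) :
    ‖z - w - x₀‖ ≤ K * (L / 2 * ‖z - x₀‖ ^ 2 + ‖A - G' x₀‖ * ‖z - x₀‖) := by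
  have hsplit : A (z - w - x₀) =
      (A - G' x₀) (z - x₀) - (G z - G x₀ - G' x₀ (z - x₀)) := by
    simp only [map_sub, _root_.sub_apply, hw, hroot]; abel
  calc ‖z - w - x₀‖ ≤ K * ‖A (z - w - x₀)‖ := A.bound_of_antilipschitz hA _
    _ ≤ K * (‖G z - G x₀ - G' x₀ (z - x₀)‖ + ‖(A - G' x₀) (z - x₀)‖) := by
      rw [hsplit, add_comm]; gcongr; exact norm_sub_le _ _
    _ ≤ K * (L / 2 * ‖z - x₀‖ ^ 2 + ‖A - G' x₀‖ * ‖z - x₀‖) := by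
      gcongr
      · exact norm_image_sub_sub_le_of_norm_hasFDerivWithin_sub_le hs hG hx₀ hL hz
      · exact (A - G' x₀).le_opNorm _

end Calculus

section Hilbert

variable {E : Type*} [NormedAddCommGroup E] [InnerProductSpace ℝ E] [CompleteSpace E]

theorem newton_type_step_bound_general {G : E → E} {G' : E → E →L[ℝ] E} {s : Set E}
    (hs : Convex ℝ s) (hG : ∀ x ∈ s, HasFDerivWithinAt G (G' x) s x)
    {x₀ : E} (hx₀ : x₀ ∈ s) (hroot : G x₀ = 0)
    {L : ℝ} (hL : ∀ x ∈ s, ‖G' x - G' x₀‖ ≤ L * ‖x - x₀‖)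
    {μ : ℝ} (hμ : 0 < μ) {A : E →L[ℝ] E} (hA : ∀ v, μ * ‖v‖ ^ 2 ≤ ⟪A v, v⟫) :
    IsUnit A ∧ ∀ z ∈ s, ‖(z - Ring.inverse A (G z)) - x₀‖ ^ 2 ≤
      (1 / μ ^ 2) * ((L ^ 2 / 2) * ‖z - x₀‖ ^ 4 + 2 * ‖A - G' x₀‖ ^ 2 * ‖z - x₀‖ ^ 2) := by
  lift μ to ℝ≥0 using hμ.le
  have hA_abs (v : E) : ‖v‖ ^ 2 * μ ≤ ‖⟪A v, v⟫‖ := by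
    rw [mul_comm]; exact (hA v).trans (le_abs_self _)
  have hunit : IsUnit A := A.isUnit_of_forall_le_norm_inner_map hμ hA_abs
  refine ⟨hunit, fun z hz ↦ ?_⟩
  have hsolve : A (Ring.inverse A (G z)) = G z :=
    DFunLike.congr_fun (Ring.mul_inverse_cancel A hunit) (G z)
  have hstep := norm_newton_step_sub_root_le hs hG hx₀ hroot hL
    (A.antilipschitz_of_forall_le_inner_map hμ hA_abs) hz hsolve
  rw [NNReal.coe_inv] at hstep
  calc ‖(z - Ring.inverse A (G z)) - x₀‖ ^ 2
      ≤ ((μ : ℝ)⁻¹ * (L / 2 * ‖z - x₀‖ ^ 2 + ‖A - G' x₀‖ * ‖z - x₀‖)) ^ 2 := by gcongr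
    _ ≤ ((μ : ℝ) ^ 2)⁻¹ *
        (2 * ((L / 2 * ‖z - x₀‖ ^ 2) ^ 2 + (‖A - G' x₀‖ * ‖z - x₀‖) ^ 2)) := by
      rw [mul_pow, inv_pow]; gcongr; exact add_sq_le
    _ = _ := by ring

lemma contDiff_gradient {f : E → ℝ} {n : WithTop ℕ∞} (hf : ContDiff ℝ (n + 1) f) :
    ContDiff ℝ n (gradient f) :=
  (InnerProductSpace.toDual ℝ E).symm.contDiff.comp (hf.fderiv_right le_rfl)

end Hilbert

section EuclideanSpace

variable {n : Type*} [Fintype n] [DecidableEq n]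

lemma toEuclideanCLM_inv {𝕜 : Type*} [RCLike 𝕜] (M : Matrix n n 𝕜) :
    toEuclideanCLM (𝕜 := 𝕜) M⁻¹ = Ring.inverse (toEuclideanCLM (𝕜 := 𝕜) M) := by
  rw [nonsing_inv_eq_ringInverse]
  by_cases hM : IsUnit M
  · rw [← one_mul (Ring.inverse (toEuclideanCLM (𝕜 := 𝕜) M)),
      Ring.eq_mul_inverse_iff_mul_eq _ _ _ (hM.map _), ← map_mul, Ring.inverse_mul_cancel M hM,
      map_one]
  · rw [Ring.inverse_non_unit _ hM, map_zero,
      Ring.inverse_non_unit _ fun h ↦ hM ((MulEquiv.isUnit_map _).1 h)]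

lemma mul_norm_sq_le_inner_toEuclideanCLM {M : Matrix n n ℝ} {μ : ℝ}
    (hM : (M - μ • (1 : Matrix n n ℝ)).PosSemidef) (v : EuclideanSpace ℝ n) :
    μ * ‖v‖ ^ 2 ≤ ⟪toEuclideanCLM (𝕜 := ℝ) M v, v⟫ := by
  have h : 0 ≤ ⟪v, toEuclideanCLM (𝕜 := ℝ) (M - μ • (1 : Matrix n n ℝ)) v⟫ := by
    rw [inner_toEuclideanCLM]
    exact hM.dotProduct_mulVec_nonneg v
  rw [map_sub, map_smul, map_one, _root_.sub_apply, inner_sub_right, _root_.smul_apply,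
    one_apply_eq_self, inner_smul_right, real_inner_self_eq_norm_sq, sub_nonneg] at h
  rwa [real_inner_comm]

variable {d : ℕ}

lemma norm_toEuclideanCLM_sq_le_frobSq_mul (M : Matrix (Fin d) (Fin d) ℝ)
    (v : EuclideanSpace ℝ (Fin d)) :
    ‖toEuclideanCLM (𝕜 := ℝ) M v‖ ^ 2 ≤ frobSq M * ‖v‖ ^ 2 := by
  rw [EuclideanSpace.real_norm_sq_eq, EuclideanSpace.real_norm_sq_eq, frobSq, Finset.sum_mul]
  exact Finset.sum_le_sum fun i _ ↦ Finset.sum_mul_sq_le_sq_mul_sq Finset.univ (M i) v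

lemma specNorm_sq_le_frobSq (M : Matrix (Fin d) (Fin d) ℝ) : specNorm M ^ 2 ≤ frobSq M := by
  have hfrob : 0 ≤ frobSq M := by unfold frobSq; positivity
  rw [specNorm, ← Real.le_sqrt (norm_nonneg _) hfrob]
  refine ContinuousLinearMap.opNorm_le_bound _ (Real.sqrt_nonneg _) fun v ↦ ?_
  rw [← sq_le_sq₀ (norm_nonneg _) (by positivity), mul_pow, Real.sq_sqrt hfrob]
  exact norm_toEuclideanCLM_sq_le_frobSq_mul M v

lemma toEuclideanCLM_hess (f : EuclideanSpace ℝ (Fin d) → ℝ) (x : EuclideanSpace ℝ (Fin d)) :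
    toEuclideanCLM (𝕜 := ℝ) (hess f x) = fderiv ℝ (gradient f) x := by
  apply ContinuousLinearMap.coe_injective
  refine (EuclideanSpace.basisFun (Fin d) ℝ).toBasis.ext fun l ↦ ?_
  ext j
  simp [hess]

lemma hasFDerivAt_gradient_hess {f : EuclideanSpace ℝ (Fin d) → ℝ} {x : EuclideanSpace ℝ (Fin d)}
    (hf : DifferentiableAt ℝ (gradient f) x) :
    HasFDerivAt (gradient f) (toEuclideanCLM (𝕜 := ℝ) (hess f x)) x := by
  rw [toEuclideanCLM_hess]; exact hf.hasFDerivAt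

end EuclideanSpace

/-- The one-step estimate for a Newton-type step `x⁺ = z − Hhat⁻¹∇f(z)` with a symmetric
estimator `Hhat ⪰ μI` of the Hessian. -/
theorem newton_type_step_bound (d : ℕ)
    (f : EuclideanSpace ℝ (Fin d) → ℝ) (hf : ContDiff ℝ 2 f)
    (xstar : EuclideanSpace ℝ (Fin d)) (hstar : gradient f xstar = 0)
    (H : ℝ) (hH : ∀ x y, specNorm (hess f x - hess f y) ≤ H * ‖x - y‖)
    (μ : ℝ) (hμ : 0 < μ)
    (Hhat : Matrix (Fin d) (Fin d) ℝ) (hsymm : Hhat.IsSymm)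
    (hpd : (Hhat - μ • (1 : Matrix (Fin d) (Fin d) ℝ)).PosSemidef) :
    IsUnit Hhat ∧
    ∀ z : EuclideanSpace ℝ (Fin d),
      ‖(z - Matrix.toEuclideanCLM (𝕜 := ℝ) Hhat⁻¹ (gradient f z)) - xstar‖ ^ 2
        ≤ (1 / μ ^ 2) * ((H ^ 2 / 2) * ‖z - xstar‖ ^ 4
            + 2 * frobSq (Hhat - hess f xstar) * ‖z - xstar‖ ^ 2) := by
  have hgrad : Differentiable ℝ (gradient f) := (contDiff_gradient hf).differentiable one_ne_zero
  obtain ⟨hunit, hstep⟩ := newton_type_step_bound_general convex_univ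
    (fun x _ ↦ (hasFDerivAt_gradient_hess (hgrad x)).hasFDerivWithinAt) (Set.mem_univ xstar) hstar
    (fun x _ ↦ by rw [← map_sub]; exact hH x xstar) hμ (mul_norm_sq_le_inner_toEuclideanCLM hpd)
  refine ⟨(MulEquiv.isUnit_map _).1 hunit, fun z ↦ ?_⟩
  rw [toEuclideanCLM_inv]
  refine (hstep z (Set.mem_univ z)).trans ?_
  rw [← map_sub]
  gcongr
  exact specNorm_sq_le_frobSq _
end

section
/- Let J be a finite nonempty index set, let c > 0 and γ ∈ ℝ, and let (h_j)_{j∈J}, (ℓ_j)_{j∈J}, (h*_j)_{j∈J} be real numbers with ℓ_j + 2γ ≥ c for all j ∈ J. Set β := max_{j∈J} (h_j + 2γ)/(ℓ_j + 2γ). Then |β − 1|² ≤ (2/c²) max_{j∈J} |h_j − h*_j|² + (2/c²) Σ_{j∈J} |ℓ_j − h*_j|². -/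
open Finset

lemma abs_sub_sq_le {R : Type*} [CommRing R] [LinearOrder R] [IsStrictOrderedRing R] (a b r : R) :
    |a - b| ^ 2 ≤ 2 * (|a - r| ^ 2 + |b - r| ^ 2) := by
  have triangle : |a - b| ≤ |a - r| + |b - r| := by
    simpa only [abs_sub_comm r b] using abs_sub_le a r b
  calc |a - b| ^ 2 ≤ (|a - r| + |b - r|) ^ 2 := by gcongr
    _ ≤ 2 * (|a - r| ^ 2 + |b - r| ^ 2) := add_sq_le

section LinearOrderedField

variable {K : Type*} [Field K] [LinearOrder K] [IsStrictOrderedRing K]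

lemma abs_div_sub_one_le {a b c : K} (hc : 0 < c) (hcb : c ≤ b) :
    |a / b - 1| ≤ |a - b| / c := by
  have hb : 0 < b := hc.trans_le hcb
  calc |a / b - 1| = |a - b| / b := by rw [div_sub_one hb.ne', abs_div, abs_of_pos hb]
    _ ≤ |a - b| / c := by gcongr

lemma abs_div_sub_one_sq_le {a b c : K} (hc : 0 < c) (hcb : c ≤ b) (r : K) :
    |a / b - 1| ^ 2 ≤ 2 / c ^ 2 * |a - r| ^ 2 + 2 / c ^ 2 * |b - r| ^ 2 :=
  calc |a / b - 1| ^ 2 ≤ (|a - b| / c) ^ 2 := by gcongr; exact abs_div_sub_one_le hc hcb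
    _ = |a - b| ^ 2 / c ^ 2 := div_pow ..
    _ ≤ 2 * (|a - r| ^ 2 + |b - r| ^ 2) / c ^ 2 := by gcongr; exact abs_sub_sq_le a b r
    _ = 2 / c ^ 2 * |a - r| ^ 2 + 2 / c ^ 2 * |b - r| ^ 2 := by ring

theorem bl3_beta_deviation_bound_general {ι : Type*} {s : Finset ι} (hs : s.Nonempty)
    {c : K} (hc : 0 < c) {h ℓ : ι → K} (hℓ : ∀ j ∈ s, c ≤ ℓ j) (hstar : ι → K) :
    |s.sup' hs (fun j => h j / ℓ j) - 1| ^ 2 ≤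
      2 / c ^ 2 * s.sup' hs (fun j => |h j - hstar j| ^ 2)
        + 2 / c ^ 2 * ∑ j ∈ s, |ℓ j - hstar j| ^ 2 := by
  obtain ⟨j, hjs, hmax⟩ := s.exists_mem_eq_sup' hs (fun j => h j / ℓ j)
  have le_max : |h j - hstar j| ^ 2 ≤ s.sup' hs (fun i => |h i - hstar i| ^ 2) :=
    s.le_sup' (fun i => |h i - hstar i| ^ 2) hjs
  have le_sum : |ℓ j - hstar j| ^ 2 ≤ ∑ i ∈ s, |ℓ i - hstar i| ^ 2 :=
    single_le_sum (f := fun i => |ℓ i - hstar i| ^ 2) (fun _ _ => by positivity) hjs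
  rw [hmax]
  exact (abs_div_sub_one_sq_le hc (hℓ j hjs) (hstar j)).trans (by gcongr)

end LinearOrderedField

/-- The BL3 bound on the deviation of `β = max_j (h_j + 2γ)/(ℓ_j + 2γ)` from 1. -/
theorem bl3_beta_deviation_bound (J : Type*) [Fintype J] [Nonempty J]
    (c : ℝ) (hc : 0 < c) (γ : ℝ)
    (h ℓ hstar : J → ℝ) (hge : ∀ j, c ≤ ℓ j + 2 * γ)
    (β : ℝ)
    (hβ : β = Finset.univ.sup' Finset.univ_nonempty
      (fun j => (h j + 2 * γ) / (ℓ j + 2 * γ))) :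
    |β - 1| ^ 2 ≤ (2 / c ^ 2) *
        (Finset.univ.sup' Finset.univ_nonempty (fun j => |h j - hstar j| ^ 2))
      + (2 / c ^ 2) * ∑ j, |ℓ j - hstar j| ^ 2 := by
  -- The shift by `2γ` cancels in all differences, so it can be absorbed into `h`, `ℓ` and `hstar`.
  simpa only [hβ, add_sub_add_right_eq_sub] using
    bl3_beta_deviation_bound_general univ_nonempty hc (fun j _ => hge j)
      (h := fun j => h j + 2 * γ) (fun j => hstar j + 2 * γ)
end
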